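/- Let n ∈ ℕ and let Zₙ(s) := Σ'_{k∈ℤⁿ} |k|^{−s} (convergent for Re(s) > n). Then Zₙ extends meromorphically to ℂ with a single pole, which is simple and located at s = n, with residue Res_{s=n} Zₙ(s) = 2π^{n/2} / Γ(n/2); moreover the value of the continuation at 0 is Zₙ(0) = −1. -/

import Mathlib

open Filter Topology

noncomputable section

/-- Euclidean norm of an integer vector `k ∈ ℤⁿ`. -/
def znorm {n : ℕ} (k : Fin n → ℤ) : ℝ := Real.sqrt (∑ i, ((k i : ℝ)) ^ 2)

lemma ez_znorm_sq {n : ℕ} (k : Fin n → ℤ) : znorm k ^ 2 = ∑ i, ((k i : ℝ)) ^ 2 :=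
  Real.sq_sqrt (Finset.sum_nonneg fun _ _ => sq_nonneg _)

lemma ez_znorm_nonneg {n : ℕ} (k : Fin n → ℤ) : 0 ≤ znorm k := Real.sqrt_nonneg _

lemma ez_znorm_eq_zero {n : ℕ} (k : Fin n → ℤ) : znorm k = 0 ↔ k = 0 := by
  rw [← sq_eq_zero_iff, ez_znorm_sq, Finset.sum_eq_zero_iff_of_nonneg (fun _ _ => sq_nonneg _)]
  constructor
  · intro h; ext i; simpa using h i (Finset.mem_univ i)
  · rintro rfl; simp

lemma ez_summable {n : ℕ} {σ : ℝ} (hσ : (n : ℝ) < σ) :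
    Summable fun k : Fin n → ℤ => 1 / znorm k ^ σ := by
  let b := (EuclideanSpace.basisFun (Fin n) ℝ).toBasis
  let L := Submodule.span ℤ (Set.range b)
  have hL : Module.finrank ℤ L = n := by
    rw [ZLattice.rank ℝ L]; simp
  have h := ZLattice.summable_norm_rpow L (-σ) (by rw [hL]; linarith)
  let φ : (Fin n → ℤ) → L := fun k => ⟨∑ i, k i • b i, Submodule.sum_mem _ fun i _ =>
    Submodule.smul_mem _ _ (Submodule.subset_span ⟨i, rfl⟩)⟩
  have hφ : ∀ k i, (φ k : EuclideanSpace ℝ (Fin n)) i = k i := by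
    intro k i
    simp [φ, b, Finset.sum_apply, Pi.single_apply]
  have hinj : Function.Injective φ := by
    intro k l hkl
    ext i
    have := congrArg (fun x : L => (x : EuclideanSpace ℝ (Fin n)) i) hkl
    simp only [hφ] at this
    exact_mod_cast this
  refine (h.comp_injective hinj).congr fun k => ?_
  have : ‖φ k‖ = znorm k := by
    rw [Submodule.coe_norm, EuclideanSpace.norm_eq]
    simp [hφ, znorm]
  simp only [Function.comp, this, Real.rpow_neg (ez_znorm_nonneg k), one_div]

lemma ez_hasSum_prod {f : ℤ → ℝ} {a : ℝ} (hf0 : ∀ m, 0 ≤ f m) (hf : HasSum f a) (n : ℕ) :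
    HasSum (fun k : Fin n → ℤ => ∏ i, f (k i)) (a ^ n) := by
  induction n with
  | zero => simp
  | succ n ih =>
    rw [← (Fin.consEquiv (fun _ : Fin (n+1) => ℤ)).hasSum_iff, pow_succ']
    have hs := hf.summable.mul_of_nonneg ih.summable hf0
      (fun k => Finset.prod_nonneg fun i _ => hf0 _)
    convert! hf.mul ih hs using 1
    ext ⟨m, k⟩
    simp [Fin.prod_univ_succ, Fin.consEquiv]

lemma ez_hasSum_theta (n : ℕ) {t : ℝ} (ht : 0 < t) :
    HasSum (fun k : Fin n → ℤ => Real.exp (-Real.pi * znorm k ^ 2 * t))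
      (HurwitzZeta.evenKernel 0 t ^ n) := by
  have h := HurwitzZeta.hasSum_int_evenKernel 0 ht
  have := ez_hasSum_prod (fun _ => (Real.exp_pos _).le) h n
  convert! this using 1
  · ext k
    rw [← Real.exp_sum, ez_znorm_sq, Finset.mul_sum, Finset.sum_mul]
    simp
  

def ezPair (n : ℕ) (hn : 0 < n) : WeakFEPair ℂ :=
  have hint : MeasureTheory.LocallyIntegrableOn
      (fun x => ((HurwitzZeta.evenKernel 0 x : ℝ) : ℂ) ^ n) (Set.Ioi 0) :=
    ((Complex.continuous_ofReal.comp_continuousOn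
      (HurwitzZeta.continuousOn_evenKernel 0)).pow n).locallyIntegrableOn measurableSet_Ioi
  have htop : ∀ r : ℝ, (fun x => ((HurwitzZeta.evenKernel 0 x : ℝ) : ℂ) ^ n - 1)
      =O[atTop] (fun x : ℝ => x ^ r) := by
    intro r
    let ⟨v, hv, hv'⟩ := HurwitzZeta.isBigO_atTop_evenKernel_sub 0
    rw [← Asymptotics.isBigO_norm_left] at hv' 
    have h0 : Tendsto (fun x => HurwitzZeta.evenKernel 0 x) atTop (𝓝 1) := by
      have h1 : Tendsto (fun x => HurwitzZeta.evenKernel 0 x - 1) atTop (𝓝 0) := by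
        refine (Asymptotics.IsBigO.trans_tendsto (Asymptotics.isBigO_norm_left.mp hv') ?_).congr (by simp)
        exact Real.tendsto_exp_atBot.comp (tendsto_id.const_mul_atTop_of_neg (neg_neg_of_pos hv))
      simpa using h1.add_const 1
    have h2 : (fun x => ∑ i ∈ Finset.range n, HurwitzZeta.evenKernel 0 x ^ i)
        =O[atTop] (fun _ : ℝ => (1 : ℝ)) :=
      (tendsto_finsetSum _ fun i _ => h0.pow i).isBigO_one ℝ
    have h3 := h2.mul ((Asymptotics.isBigO_norm_left.mp hv').trans
      (isLittleO_exp_neg_mul_rpow_atTop hv r).isBigO)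
    rw [← Asymptotics.isBigO_norm_left] at h3 ⊢
    refine h3.congr (fun x => ?_) (fun x => one_mul _)
    simp only [if_true, geom_sum_mul]
    rw [← Complex.norm_real]
    push_cast
    rfl
  { f := fun x => ((HurwitzZeta.evenKernel 0 x : ℝ) : ℂ) ^ n
    g := fun x => ((HurwitzZeta.evenKernel 0 x : ℝ) : ℂ) ^ n
    k := n / 2
    ε := 1
    f₀ := 1
    g₀ := 1
    hf_int := hint
    hg_int := hint
    hk := by positivity
    hε := one_ne_zero
    h_feq := by
      intro x hx
      have hx' : (0 : ℝ) < x := hx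
      have : HurwitzZeta.evenKernel 0 (1 / x) = x ^ (1 / 2 : ℝ) * HurwitzZeta.evenKernel 0 x := by
        rw [HurwitzZeta.evenKernel_functional_equation 0 (1 / x), one_div_one_div,
          HurwitzZeta.evenKernel_eq_cosKernel_of_zero]
        simp [Real.inv_rpow hx'.le]
      rw [this, smul_eq_mul, one_mul, Complex.ofReal_mul, mul_pow, ← Complex.ofReal_pow (x ^ _),
        ← Real.rpow_mul_natCast hx'.le]
      rw [show (1 / 2 : ℝ) * n = n / 2 by ring]
    hf_top := htop
    hg_top := htop }

lemma ez_hasSum_mellin (n : ℕ) (hn : 0 < n) {s : ℂ} (hs : (n : ℝ) < s.re) :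
    HasSum (fun k : Fin n → ℤ => Complex.Gammaℝ s * 1 / (|znorm k| : ℝ) ^ s)
      ((ezPair n hn).Λ (s / 2)) := by
  have hk : (ezPair n hn).k < (s / 2).re := by
    simp only [ezPair, Complex.div_ofNat_re]; linarith
  rw [← ((ezPair n hn).hasMellin hk).2]
  have hn' : (0 : ℝ) < n := by exact_mod_cast hn
  refine hasSum_mellin_pi_mul_sq (by linarith) (fun t ht => ?_) ?_
  · have h := hasSum_ite_sub_hasSum ((Complex.hasSum_ofReal).mpr (ez_hasSum_theta n ht)) 0
    convert! h using 1
    · ext k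
      simp [ez_znorm_eq_zero]
    · simp [ezPair, (ez_znorm_eq_zero _).mpr]
  · simpa [abs_of_nonneg (ez_znorm_nonneg _)] using ez_summable hs

theorem epstein_zeta_Zn (n : ℕ) (hn : 0 < n) :
    ∃ g : ℂ → ℂ,
      DifferentiableOn ℂ g {s : ℂ | s ≠ (n : ℂ)} ∧
      (∀ s : ℂ, (n : ℝ) < s.re →
        HasSum (fun k : Fin n → ℤ =>
          if k = 0 then 0 else ((znorm k : ℂ) ^ s)⁻¹) (g s)) ∧
      Tendsto (fun s => (s - (n : ℂ)) * g s) (𝓝[≠] ((n : ℂ)))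
        (𝓝 (((2 * Real.pi ^ ((n : ℝ) / 2) / Real.Gamma ((n : ℝ) / 2) : ℝ)) : ℂ)) ∧
      g 0 = -1 := by
  have hpi : (Real.pi : ℂ) ≠ 0 := Complex.ofReal_ne_zero.mpr Real.pi_ne_zero
  have hn' : (0 : ℝ) < n := by exact_mod_cast hn
  let P := ezPair n hn
  let A : ℂ → ℂ := fun s => (Complex.Gammaℝ s)⁻¹
  let B : ℂ → ℂ := fun s => (Real.pi : ℂ) ^ (s / 2) * (Complex.Gamma (s / 2 + 1))⁻¹
  have hA : Differentiable ℂ A := Complex.differentiable_Gammaℝ_inv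
  have hB : Differentiable ℂ B := by
    have h1 : Differentiable ℂ fun s : ℂ => (Complex.Gamma (s / 2 + 1))⁻¹ :=
      Complex.differentiable_one_div_Gamma.comp (by fun_prop)
    have h2 : Differentiable ℂ fun s : ℂ => (Real.pi : ℂ) ^ (s / 2) := by
      intro s
      exact DifferentiableAt.const_cpow (by fun_prop) (Or.inl hpi)
    exact h2.mul h1
  have hΛ : Differentiable ℂ fun s : ℂ => P.Λ₀ (s / 2) :=
    P.differentiable_Λ₀.comp (by fun_prop)
  refine ⟨fun s => A s * (P.Λ₀ (s / 2) + 2 / (s - n)) - B s, ?_, ?_, ?_, ?_⟩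
  · intro s hs
    have : s - n ≠ 0 := sub_ne_zero.mpr hs
    have h1 : DifferentiableAt ℂ (fun s : ℂ => 2 / (s - n)) s := by fun_prop (disch := assumption)
    exact (((hA s).mul ((hΛ s).add h1)).sub (hB s)).differentiableWithinAt
  · intro s hs
    have hs0 : 0 < s.re := hn'.trans hs
    have hsne : s ≠ 0 := by rintro rfl; simp at hs0
    have hG := Complex.Gammaℝ_ne_zero_of_re_pos hs0
    have hsn : s - n ≠ 0 := by
      intro h
      rw [sub_eq_zero] at h
      rw [h] at hs; simp at hs
    have h := (ez_hasSum_mellin n hn hs).mul_left (A s)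
    convert! h using 1
    · ext k
      rw [abs_of_nonneg (ez_znorm_nonneg k)]
      split_ifs with hk
      · rw [(ez_znorm_eq_zero k).mpr hk]; simp [Complex.zero_cpow hsne]
      · simp only [A]; field_simp
    · have hB' : B s = A s * (2 / s) := by
        have hs2 : s / 2 ≠ 0 := div_ne_zero hsne two_ne_zero
        simp only [A, B, Complex.Gammaℝ_def, Complex.Gamma_add_one _ hs2, neg_div, Complex.cpow_neg,
          mul_inv, inv_inv]
        field_simp
      have : n - s ≠ 0 := by rw [← neg_sub]; exact neg_ne_zero.mpr hsn
      have h4 : (1 : ℂ) / (((n / 2 : ℝ) : ℂ) - s / 2) = - (2 / (s - n)) := by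
        push_cast
        rw [← sub_div, ← neg_sub s]
        field_simp
      have h5 : (1 : ℂ) / (s / 2) = 2 / s := by field_simp
      simp only [hB', WeakFEPair.Λ]
      change _ = A s * (P.Λ₀ (s / 2) - (1 / (s / 2)) • (1 : ℂ) - ((1 : ℂ) / (((n / 2 : ℝ) : ℂ) - s / 2)) • (1 : ℂ))
      rw [h4, h5]
      simp only [smul_eq_mul]
      ring
  · have h1 : Tendsto (fun s : ℂ => (s - n) * (A s * P.Λ₀ (s / 2) - B s) + 2 * A s) (𝓝 (n : ℂ))
        (𝓝 (((n : ℂ) - n) * (A n * P.Λ₀ (n / 2) - B n) + 2 * A n)) := by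
      have : Continuous fun s : ℂ => (s - n) * (A s * P.Λ₀ (s / 2) - B s) + 2 * A s :=
        ((continuous_id.sub continuous_const).mul ((hA.continuous.mul hΛ.continuous).sub
          hB.continuous)).add (continuous_const.mul hA.continuous)
      exact this.tendsto _
    have h2 : ((n : ℂ) - n) * (A n * P.Λ₀ (n / 2) - B n) + 2 * A n
        = (((2 * Real.pi ^ ((n : ℝ) / 2) / Real.Gamma ((n : ℝ) / 2) : ℝ)) : ℂ) := by
      simp only [sub_self, zero_mul, zero_add, A, Complex.Gammaℝ_def, neg_div, Complex.cpow_neg,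
          mul_inv, inv_inv]
      push_cast
      rw [Complex.ofReal_cpow Real.pi_pos.le, ← Complex.Gamma_ofReal]
      push_cast
      ring
    rw [h2] at h1
    refine (h1.mono_left nhdsWithin_le_nhds).congr' ?_
    filter_upwards [self_mem_nhdsWithin] with s hs
    have : s - n ≠ 0 := sub_ne_zero.mpr hs
    field_simp
    ring
  · have : A 0 = 0 := by simp [A, Complex.Gammaℝ_def]
    simp [this, B]

end
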